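/- Let B be a brace with B = Soc_n(B) for some n ∈ ℕ. If the multiplicative group (B,·) is supersoluble, then B is a supersoluble brace. -/

import Mathlib

/-- A (skew left) brace: a set with an additive group structure (not necessarily abelian)
and a multiplicative group structure sharing the same identity, satisfying the skew
distributive law `a * (b + c) = a * b + -a + a * c`. -/
class SkewBrace (B : Type*) extends AddGroup B, Group B where
  one_eq_zero : (1 : B) = (0 : B)
  skew_distrib : ∀ a b c : B, a * (b + c) = a * b + -a + a * c

/-- A group is supersoluble if it has a finite chain of normal subgroups with all
factors cyclic. -/
def Group.IsSupersoluble (G : Type*) [Group G] : Prop :=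
  ∃ (n : ℕ) (H : ℕ → Subgroup G),
    H 0 = ⊥ ∧ H n = ⊤ ∧ (∀ i, (H i).Normal) ∧ (∀ i, i < n → H i ≤ H (i + 1)) ∧
    ∀ i, i < n → ∃ x ∈ H (i + 1), ∀ y ∈ H (i + 1), ∃ k : ℤ, (x ^ k)⁻¹ * y ∈ H i

namespace SkewBrace

variable {B : Type*} [SkewBrace B]

/-- `lam a b = -a + a * b`, i.e. `λ_a(b)`. -/
def lam (a b : B) : B := -a + a * b

/-- the star operation `a ∗ b = λ_a(b) - b`. -/
def starOp (a b : B) : B := lam a b + -b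

/-- the additive commutator `[a,b]_+`. -/
def addCommutator (a b : B) : B := -a + -b + a + b

/-- A subbrace of `B`: a subset that is a subgroup of both `(B,+)` and `(B,·)`. -/
structure Subbrace (B : Type*) [SkewBrace B] where
  carrier : Set B
  zero_mem : (0 : B) ∈ carrier
  add_mem : ∀ {a b : B}, a ∈ carrier → b ∈ carrier → a + b ∈ carrier
  neg_mem : ∀ {a : B}, a ∈ carrier → -a ∈ carrier
  mul_mem : ∀ {a b : B}, a ∈ carrier → b ∈ carrier → a * b ∈ carrier
  inv_mem : ∀ {a : B}, a ∈ carrier → a⁻¹ ∈ carrier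

/-- An ideal of `B`: a subbrace that is normal in `(B,+)` and in `(B,·)` and is
invariant under all the maps `λ_b`. -/
structure BraceIdeal (B : Type*) [SkewBrace B] extends Subbrace B where
  addConj_mem : ∀ (b : B) {a : B}, a ∈ carrier → b + a + -b ∈ carrier
  mulConj_mem : ∀ (b : B) {a : B}, a ∈ carrier → b * a * b⁻¹ ∈ carrier
  lam_mem : ∀ (b : B) {a : B}, a ∈ carrier → lam b a ∈ carrier

/-- The additive subgroup underlying a subbrace. -/
def Subbrace.addSubgroup (S : Subbrace B) : AddSubgroup B where
  carrier := S.carrier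
  zero_mem' := S.zero_mem
  add_mem' := S.add_mem
  neg_mem' := S.neg_mem

/-- The multiplicative subgroup underlying a subbrace. -/
def Subbrace.subgroup (S : Subbrace B) : Subgroup B where
  carrier := S.carrier
  one_mem' := by rw [one_eq_zero]; exact S.zero_mem
  mul_mem' := S.mul_mem
  inv_mem' := S.inv_mem

/-- Given ideals `J ≤ I` of `B`, `MemSocQuotRel I J x` says that the coset of `x`
lies in `Soc(I/J) = Ker(λ) ∩ Z(I/J, +)` (for `I = B` take `I = Set.univ`). -/
def MemSocQuotRel (I J : Set B) (x : B) : Prop :=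
  x ∈ I ∧ (∀ y ∈ I, -y + lam x y ∈ J) ∧ ∀ y ∈ I, -(y + x) + (x + y) ∈ J

/-- Given ideals `J ≤ I` of `B`, `MemZetaQuotRel I J x` says that the coset of `x`
lies in `ζ(I/J) = Soc(I/J) ∩ Z(I/J, ·)`. -/
def MemZetaQuotRel (I J : Set B) (x : B) : Prop :=
  MemSocQuotRel I J x ∧ ∀ y ∈ I, (y * x)⁻¹ * (x * y) ∈ J

/-- The coset of `x` lies in `Soc(B/J)`. -/
def MemSocQuot (J : Set B) (x : B) : Prop := MemSocQuotRel Set.univ J x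

/-- The coset of `x` lies in `ζ(B/J)`. -/
def MemZetaQuot (J : Set B) (x : B) : Prop := MemZetaQuotRel Set.univ J x

/-- For ideals `I ≤ J`, the additive group of the quotient `J/I` is infinite cyclic. -/
def QuotAddInfCyclic (I J : Set B) : Prop :=
  ∃ x ∈ J, (∀ y ∈ J, ∃ n : ℤ, -(n • x) + y ∈ I) ∧ ∀ n : ℤ, n • x ∈ I → n = 0

/-- For ideals `I ≤ J`, the quotient `J/I` has prime order `p`. -/
def QuotPrimeOrder (I J : Set B) (p : ℕ) : Prop :=
  p.Prime ∧ ∃ x ∈ J, x ∉ I ∧ p • x ∈ I ∧ ∀ y ∈ J, ∃ n : ℤ, -(n • x) + y ∈ I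

/-- A brace is supersoluble if it has a finite chain of ideals each factor of which
either is additively infinite cyclic and contained in the socle of the corresponding
quotient, or has prime order. -/
def IsSupersoluble (B : Type*) [SkewBrace B] : Prop :=
  ∃ (n : ℕ) (I : ℕ → BraceIdeal B),
    (I 0).carrier = {0} ∧ (I n).carrier = Set.univ ∧
    (∀ i, i < n → (I i).carrier ⊆ (I (i + 1)).carrier) ∧
    ∀ i, i < n →
      (QuotAddInfCyclic (I i).carrier (I (i + 1)).carrier ∧
        ∀ x ∈ (I (i + 1)).carrier, MemSocQuot (I i).carrier x) ∨
      ∃ p : ℕ, QuotPrimeOrder (I i).carrier (I (i + 1)).carrier p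

/-- The upper socle series of the brace (carrier of the ideal) `I`. -/
def socChainRel (I : Set B) : ℕ → Set B
  | 0 => {0}
  | n + 1 => {x | MemSocQuotRel I (socChainRel I n) x}

/-- The upper central series of the brace (carrier of the ideal) `I`. -/
def zetaChainRel (I : Set B) : ℕ → Set B
  | 0 => {0}
  | n + 1 => {x | MemZetaQuotRel I (zetaChainRel I n) x}

/-- The upper socle series `Soc_n(B)` of `B`. -/
def socChain (B : Type*) [SkewBrace B] : ℕ → Set B := socChainRel Set.univ

/-- The upper central series `ζ_n(B)` of `B`. -/
def zetaChain (B : Type*) [SkewBrace B] : ℕ → Set B := zetaChainRel Set.univ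

/-- A brace is centrally nilpotent if its upper central series reaches `B`. -/
def IsCentrallyNilpotent (B : Type*) [SkewBrace B] : Prop :=
  ∃ m : ℕ, zetaChain B m = Set.univ

end SkewBrace

/-!
The product `(x, y) ↦ x * y` differs from `x + y` by an element of the ideal `I` as soon as `x` lies
in `Soc(B/I)`. Hence, between `I` and `Soc(B/I)`, every normal subgroup of `(B,·)` is an ideal, and
powers agree with multiples modulo `I`. Intersecting a supersoluble series of `(B,·)` with the
interval from `I` to `Soc(B/I)` and refining its finite cyclic factors to factors of prime order
therefore gives a chain of ideals of the required kind; concatenating these chains along the upper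
socle series proves the theorem.
-/

open Relation Subgroup

section NormalSeries

variable {G : Type*} [Group G]

/-- For `M` normal, `N` contains `M` and `N / M` is cyclic. Stated as `N = M ⊔ ⟨x⟩`, so that joining
with a further subgroup is associativity of `⊔`. -/
def IsCyclicOver (M N : Subgroup G) : Prop :=
  ∃ x, N = M ⊔ zpowers x

/-- A link `M ≤ N` of a normal series whose factor `N / M`, generated by the coset of `x`, is
infinite cyclic or of prime order. Normality is only asked of `N`: along a chain of links, that
of `M` comes from the preceding link. -/
def IsNormalLink (M N : Subgroup G) : Prop :=
  N.Normal ∧ ∃ x, N = M ⊔ zpowers x ∧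
    ((∀ n : ℤ, x ^ n ∈ M → n = 0) ∨ ∃ p : ℕ, p.Prime ∧ x ∉ M ∧ x ^ p ∈ M)

theorem IsNormalLink.le {M N : Subgroup G} (h : IsNormalLink M N) : M ≤ N := by
  obtain ⟨-, x, rfl, -⟩ := h
  exact le_sup_left

theorem mem_sup_zpowers_iff {M : Subgroup G} [M.Normal] {x y : G} :
    y ∈ M ⊔ zpowers x ↔ ∃ k : ℤ, (x ^ k)⁻¹ * y ∈ M := by
  rw [sup_comm, mem_sup_of_normal_right]
  constructor
  · rintro ⟨_, ⟨k, rfl⟩, m, hm, rfl⟩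
    exact ⟨k, by simpa using hm⟩
  · rintro ⟨k, hk⟩
    exact ⟨x ^ k, ⟨k, rfl⟩, _, hk, mul_inv_cancel_left _ _⟩

theorem IsCyclicOver.sup_left {M N : Subgroup G} (h : IsCyclicOver M N) (C : Subgroup G) :
    IsCyclicOver (C ⊔ M) (C ⊔ N) := by
  obtain ⟨x, rfl⟩ := h
  exact ⟨x, (sup_assoc _ _ _).symm⟩

theorem IsCyclicOver.inf_left {M N : Subgroup G} [M.Normal] (h : IsCyclicOver M N)
    (C : Subgroup G) : IsCyclicOver (C ⊓ M) (C ⊓ N) := by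
  obtain ⟨x, rfl⟩ := h
  have image_le : (C ⊓ (M ⊔ zpowers x)).map (QuotientGroup.mk' M) ≤
      zpowers (QuotientGroup.mk' M x) := by
    rintro _ ⟨y, ⟨-, hy⟩, rfl⟩
    obtain ⟨k, hk⟩ := mem_sup_zpowers_iff.1 hy
    exact ⟨k, QuotientGroup.eq.2 hk⟩
  obtain ⟨⟨_, z, ⟨hzC, hzN⟩, rfl⟩, hz⟩ := (isCyclic_of_le image_le).exists_generator
  refine ⟨z, le_antisymm (fun y hy => ?_) (sup_le (inf_le_inf_left C le_sup_left) ?_)⟩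
  · obtain ⟨k, hk⟩ := hz ⟨_, y, hy, rfl⟩
    have hkM : (z ^ k)⁻¹ * y ∈ M := QuotientGroup.eq.1 (congrArg Subtype.val hk)
    have hkC : (z ^ k)⁻¹ * y ∈ C := C.mul_mem (C.inv_mem (C.zpow_mem hzC k)) hy.1
    rw [← mul_inv_cancel_left (z ^ k) y]
    exact mul_mem (mem_sup_right ⟨k, rfl⟩) (mem_sup_left ⟨hkC, hkM⟩)
  · exact zpowers_le.2 ⟨hzC, hzN⟩

theorem normal_of_le_sup_zpowers {M L : Subgroup G} [M.Normal] {x : G}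
    [hN : (M ⊔ zpowers x).Normal] (hML : M ≤ L) (hLN : L ≤ M ⊔ zpowers x) : L.Normal := by
  refine ⟨fun l hl b => ?_⟩
  obtain ⟨j, hj⟩ := mem_sup_zpowers_iff.1 (hLN hl)
  obtain ⟨i, hi⟩ := mem_sup_zpowers_iff.1
    (hN.conj_mem x (mem_sup_right (mem_zpowers x)) b)
  let q := QuotientGroup.mk' M
  have hl_eq : q x ^ j = q l := QuotientGroup.eq.2 hj
  have hx_conj : q x ^ i = q b * q x * (q b)⁻¹ := QuotientGroup.eq.2 hi
  have hl_conj : q (l ^ i) = q (b * l * b⁻¹) := calc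
    q (l ^ i) = (q x ^ i) ^ j := by rw [map_zpow, ← hl_eq, zpow_comm]
    _ = q (b * l * b⁻¹) := by rw [hx_conj, conj_zpow, hl_eq, ← map_inv, ← map_mul, ← map_mul]
  rw [← mul_inv_cancel_left (l ^ i) (b * l * b⁻¹)]
  exact mul_mem (zpow_mem hl i) (hML (QuotientGroup.eq.1 hl_conj))

theorem reflTransGen_isNormalLink_sup_zpowers_of_pow_mem {M : Subgroup G} [M.Normal] {k : ℕ}
    (hk : k ≠ 0) {x : G} [hN : (M ⊔ zpowers x).Normal] (hxk : x ^ k ∈ M) :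
    ReflTransGen IsNormalLink M (M ⊔ zpowers x) := by
  induction k using induction_on_primes generalizing x with
  | zero => exact absurd rfl hk
  | one =>
    rw [pow_one] at hxk
    rw [sup_eq_left.2 (zpowers_le.2 hxk)]
  | prime_mul p m hp ih =>
    let L := M ⊔ zpowers (x ^ p)
    have hxp : x ^ p ∈ L := mem_sup_right (mem_zpowers _)
    have hLx : L ⊔ zpowers x = M ⊔ zpowers x := by
      rw [sup_assoc, sup_eq_right.2 (zpowers_le.2 (pow_mem (mem_zpowers x) p))]
    have hL : L.Normal := normal_of_le_sup_zpowers le_sup_left (hLx ▸ le_sup_left)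
    have chain_ML : ReflTransGen IsNormalLink M L :=
      ih (right_ne_zero_of_mul hk) (by rwa [← pow_mul])
    rw [← hLx] at hN ⊢
    by_cases hxL : x ∈ L
    · rwa [sup_eq_left.2 (zpowers_le.2 hxL)]
    · exact chain_ML.tail ⟨hN, x, rfl, Or.inr ⟨p, hp, hxL, hxp⟩⟩

theorem IsCyclicOver.reflTransGen_isNormalLink {M N : Subgroup G} [M.Normal] [hN : N.Normal]
    (h : IsCyclicOver M N) : ReflTransGen IsNormalLink M N := by
  obtain ⟨x, rfl⟩ := h
  by_cases hfin : ∃ n : ℤ, x ^ n ∈ M ∧ n ≠ 0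
  · obtain ⟨n, hxn, hn⟩ := hfin
    refine reflTransGen_isNormalLink_sup_zpowers_of_pow_mem (Int.natAbs_ne_zero.2 hn) ?_
    rwa [← QuotientGroup.eq_one_iff, QuotientGroup.mk_pow, pow_natAbs_eq_one,
      ← QuotientGroup.mk_zpow, QuotientGroup.eq_one_iff]
  · push Not at hfin
    exact .single ⟨hN, x, rfl, Or.inl hfin⟩

theorem reflTransGen_isNormalLink_of_isSupersoluble (hG : Group.IsSupersoluble G)
    {S T : Subgroup G} [S.Normal] [T.Normal] (hST : S ≤ T) :
    ReflTransGen IsNormalLink S T := by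
  obtain ⟨n, H, hbot, htop, hnormal, hle, hcyc⟩ := hG
  have cyclic (i : ℕ) (hi : i < n) : IsCyclicOver (H i) (H (i + 1)) := by
    obtain ⟨x, hx, hgen⟩ := hcyc i hi
    have := hnormal i
    exact ⟨x, le_antisymm (fun y hy => mem_sup_zpowers_iff.2 (hgen y hy))
      (sup_le (hle i hi) (zpowers_le.2 hx))⟩
  have chain (i : ℕ) (hi : i ≤ n) : ReflTransGen IsNormalLink S (T ⊓ (S ⊔ H i)) := by
    induction i with
    | zero => rw [hbot, sup_bot_eq, inf_eq_right.2 hST]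
    | succ i ih =>
      have := hnormal i
      have := hnormal (i + 1)
      exact (ih (by lia)).trans
        (((cyclic i hi).sup_left S).inf_left T).reflTransGen_isNormalLink
  simpa only [htop, sup_top_eq, inf_top_eq] using chain n le_rfl

end NormalSeries

theorem exists_nat_chain_of_reflTransGen {α : Type*} {r : α → α → Prop} {a b : α}
    (h : ReflTransGen r a b) :
    ∃ (n : ℕ) (f : ℕ → α), f 0 = a ∧ f n = b ∧ ∀ i < n, r (f i) (f (i + 1)) := by
  induction h using ReflTransGen.head_induction_on with
  | refl => exact ⟨0, fun _ => b, rfl, rfl, fun i hi => absurd hi i.not_lt_zero⟩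
  | @head a c hac _ ih =>
    obtain ⟨n, f, rfl, hn, hf⟩ := ih
    refine ⟨n + 1, fun i => i.casesOn a f, rfl, hn, fun i hi => ?_⟩
    cases i with
    | zero => exact hac
    | succ i => exact hf i (Nat.lt_of_succ_lt_succ hi)

namespace SkewBrace

section Lambda

variable {B : Type*} [SkewBrace B]

theorem mul_eq_add_lam (a b : B) : a * b = a + lam a b :=
  (add_neg_cancel_left a (a * b)).symm

theorem lam_add (a b c : B) : lam a (b + c) = lam a b + lam a c := by
  simp only [lam, skew_distrib, add_assoc]

theorem lam_one_left (a : B) : lam 1 a = a := by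
  rw [lam, one_eq_zero, neg_zero, zero_add, ← one_eq_zero, one_mul]

theorem lam_mul (a b c : B) : lam (a * b) c = lam a (lam b c) := by
  apply add_left_cancel (a := a * b)
  rw [← mul_eq_add_lam, mul_assoc, mul_eq_add_lam b c, skew_distrib, add_assoc]
  rfl

theorem lam_lam_inv (a b : B) : lam a (lam a⁻¹ b) = b := by
  rw [← lam_mul, mul_inv_cancel, lam_one_left]

theorem lam_self_inv (a : B) : lam a a⁻¹ = -a := by
  rw [lam, mul_inv_cancel, one_eq_zero, add_zero]

theorem lam_inv_mul (a b : B) : lam a (a⁻¹ * b) = -a + b := by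
  rw [lam, mul_inv_cancel_left]

end Lambda

section Projection

variable {B : Type*} [SkewBrace B]

instance BraceIdeal.subgroup_normal (I : BraceIdeal B) : I.subgroup.Normal :=
  ⟨fun _ ha b => I.mulConj_mem b ha⟩

instance BraceIdeal.addSubgroup_normal (I : BraceIdeal B) : I.addSubgroup.Normal :=
  ⟨fun _ ha b => I.addConj_mem b ha⟩

/-- The projection `B → B/I`, onto the additive group of the quotient only: congruences modulo `I`
that involve products are stated as equations `I.proj (a * b) = …`. -/
def BraceIdeal.proj (I : BraceIdeal B) : B →+ B ⧸ I.addSubgroup :=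
  QuotientAddGroup.mk' I.addSubgroup

namespace BraceIdeal

variable {I : BraceIdeal B} {a b : B}

theorem proj_eq_iff : I.proj a = I.proj b ↔ -a + b ∈ I.carrier :=
  QuotientAddGroup.eq

theorem proj_eq_iff_inv_mul_mem : I.proj a = I.proj b ↔ a⁻¹ * b ∈ I.carrier := by
  rw [proj_eq_iff, ← lam_inv_mul]
  refine ⟨fun h => ?_, I.lam_mem a⟩
  simpa only [← lam_mul, inv_mul_cancel, lam_one_left] using I.lam_mem a⁻¹ h

theorem proj_eq_zero_iff : I.proj a = 0 ↔ a ∈ I.carrier :=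
  QuotientAddGroup.eq_zero_iff a

theorem proj_lam_congr (c : B) (h : I.proj a = I.proj b) :
    I.proj (lam c a) = I.proj (lam c b) := by
  rw [← add_neg_cancel_left a b, lam_add, map_add,
    proj_eq_zero_iff.2 (I.lam_mem c (proj_eq_iff.1 h)), add_zero]

end BraceIdeal

end Projection

section Socle

variable {B : Type*} [SkewBrace B] {I J : BraceIdeal B} {x y : B}

theorem memSocQuot_iff_proj : MemSocQuot I.carrier x ↔
    (∀ y, I.proj (lam x y) = I.proj y) ∧ ∀ y, I.proj x + I.proj y = I.proj y + I.proj x := by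
  simp only [MemSocQuot, MemSocQuotRel, Set.mem_univ, true_and, forall_true_left,
    ← BraceIdeal.proj_eq_iff, map_add, eq_comm]

theorem memSocQuot_of_mem (hx : x ∈ I.carrier) : MemSocQuot I.carrier x := by
  have hx0 : I.proj x = 0 := BraceIdeal.proj_eq_zero_iff.2 hx
  refine memSocQuot_iff_proj.2 ⟨fun y => ?_, fun y => by rw [hx0, zero_add, add_zero]⟩
  have hxy : I.proj y = I.proj (x * y) := by
    rw [BraceIdeal.proj_eq_iff_inv_mul_mem]
    simpa only [inv_inv, mul_assoc] using I.mulConj_mem y⁻¹ hx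
  rw [lam, map_add, map_neg, hx0, neg_zero, zero_add, hxy]

namespace MemSocQuot

theorem mono {S T : Set B} (hST : S ⊆ T) (hx : MemSocQuot S x) : MemSocQuot T x :=
  ⟨hx.1, fun y hy => hST (hx.2.1 y hy), fun y hy => hST (hx.2.2 y hy)⟩

theorem proj_lam (hx : MemSocQuot I.carrier x) (y : B) : I.proj (lam x y) = I.proj y :=
  (memSocQuot_iff_proj.1 hx).1 y

theorem proj_add_comm (hx : MemSocQuot I.carrier x) (y : B) :
    I.proj x + I.proj y = I.proj y + I.proj x :=
  (memSocQuot_iff_proj.1 hx).2 y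

theorem proj_mul (hx : MemSocQuot I.carrier x) (y : B) :
    I.proj (x * y) = I.proj x + I.proj y := by
  rw [mul_eq_add_lam, map_add, hx.proj_lam]

theorem proj_inv (hx : MemSocQuot I.carrier x) : I.proj x⁻¹ = -I.proj x := by
  rw [← hx.proj_lam, lam_self_inv, map_neg]

theorem proj_addConj (hx : MemSocQuot I.carrier x) (b : B) :
    I.proj (b + x + -b) = I.proj x := by
  rw [map_add, map_add, ← hx.proj_add_comm, map_neg, add_neg_cancel_right]

theorem proj_lam_add_comm (hx : MemSocQuot I.carrier x) (b y : B) :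
    I.proj (lam b x) + I.proj y = I.proj y + I.proj (lam b x) := by
  have h : I.proj (x + lam b⁻¹ y) = I.proj (lam b⁻¹ y + x) := by
    rw [map_add, map_add, hx.proj_add_comm]
  simpa only [lam_add, map_add, lam_lam_inv] using BraceIdeal.proj_lam_congr b h

theorem proj_mulConj (hx : MemSocQuot I.carrier x) (b : B) :
    I.proj (b * x * b⁻¹) = I.proj (lam b x) := calc
  I.proj (b * x * b⁻¹) = I.proj b + I.proj (lam b x) + I.proj (lam b (lam x b⁻¹)) := by
    rw [mul_eq_add_lam (b * x), lam_mul, mul_eq_add_lam b x, map_add, map_add]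
  _ = I.proj b + I.proj (lam b x) + -I.proj b := by
    rw [BraceIdeal.proj_lam_congr b (hx.proj_lam b⁻¹), lam_self_inv, map_neg]
  _ = I.proj (lam b x) := by
    rw [← hx.proj_lam_add_comm, add_neg_cancel_right]

end MemSocQuot

/-- The preimage of `Soc(B/I)` in `B`, as a subgroup of `(B,·)`. -/
def socSubgroup (I : BraceIdeal B) : Subgroup B where
  carrier := {x | MemSocQuot I.carrier x}
  one_mem' := memSocQuot_of_mem (by rw [one_eq_zero]; exact I.zero_mem)
  mul_mem' {x z} hx hz := memSocQuot_iff_proj.2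
    ⟨fun y => by rw [lam_mul, hx.proj_lam, hz.proj_lam],
      fun y => by rw [hx.proj_mul, add_assoc, hz.proj_add_comm, ← add_assoc, hx.proj_add_comm,
        add_assoc]⟩
  inv_mem' {x} hx := memSocQuot_iff_proj.2
    ⟨fun y => by rw [← hx.proj_lam, lam_lam_inv],
      fun y => by rw [hx.proj_inv]; exact AddCommute.neg_left (hx.proj_add_comm y)⟩

instance socSubgroup_normal (I : BraceIdeal B) : (socSubgroup I).Normal := by
  refine ⟨fun x (hx : MemSocQuot I.carrier x) b => memSocQuot_iff_proj.2 ⟨fun y => ?_, fun y => ?_⟩⟩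
  · rw [lam_mul, lam_mul, BraceIdeal.proj_lam_congr b (hx.proj_lam _), lam_lam_inv]
  · rw [hx.proj_mulConj, hx.proj_lam_add_comm]

theorem subgroup_le_socSubgroup (I : BraceIdeal B) : I.subgroup ≤ socSubgroup I :=
  fun _ => memSocQuot_of_mem

theorem socSubgroup_mono (hIJ : I.carrier ⊆ J.carrier) : socSubgroup I ≤ socSubgroup J :=
  fun _ => MemSocQuot.mono hIJ

theorem MemSocQuot.proj_zpow (hx : MemSocQuot I.carrier x) (n : ℤ) :
    I.proj (x ^ n) = n • I.proj x :=
  let f : socSubgroup I →* Multiplicative (B ⧸ I.addSubgroup) :=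
    MonoidHom.mk' (fun z => .ofAdd (I.proj z)) fun z w => MemSocQuot.proj_mul z.2 w
  map_zpow f ⟨x, hx⟩ n

theorem MemSocQuot.zsmul_mem_iff (hx : MemSocQuot I.carrier x) (n : ℤ) :
    n • x ∈ I.carrier ↔ x ^ n ∈ I.carrier := by
  rw [← BraceIdeal.proj_eq_zero_iff, map_zsmul, ← hx.proj_zpow, BraceIdeal.proj_eq_zero_iff]

theorem MemSocQuot.neg_zsmul_add_mem_iff (hx : MemSocQuot I.carrier x) (n : ℤ) (y : B) :
    -(n • x) + y ∈ I.carrier ↔ (x ^ n)⁻¹ * y ∈ I.carrier := by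
  rw [← BraceIdeal.proj_eq_iff, map_zsmul, ← hx.proj_zpow, BraceIdeal.proj_eq_iff_inv_mul_mem]

theorem mem_of_proj_eq {N : Subgroup B} (hIN : I.subgroup ≤ N) (hx : x ∈ N)
    (h : I.proj x = I.proj y) : y ∈ N := by
  rw [← mul_inv_cancel_left x y]
  exact mul_mem hx (hIN (BraceIdeal.proj_eq_iff_inv_mul_mem.1 h))

/-- A normal subgroup of `(B,·)` lying between `I` and `Soc(B/I)`, as an ideal of `B`. -/
def idealOfNormal (I : BraceIdeal B) (N : Subgroup B) (hN : N.Normal) (hIN : I.subgroup ≤ N)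
    (hNsoc : N ≤ socSubgroup I) : BraceIdeal B where
  carrier := N
  zero_mem := hIN I.zero_mem
  add_mem {x y} hx hy := mem_of_proj_eq hIN (mul_mem hx hy) <| by
    rw [(hNsoc hx).proj_mul, map_add]
  neg_mem {x} hx := mem_of_proj_eq hIN (inv_mem hx) <| by
    rw [(hNsoc hx).proj_inv, map_neg]
  mul_mem := mul_mem
  inv_mem := inv_mem
  addConj_mem b _ hx := mem_of_proj_eq hIN hx ((hNsoc hx).proj_addConj b).symm
  mulConj_mem b _ hx := hN.conj_mem _ hx b
  lam_mem b _ hx := mem_of_proj_eq hIN (hN.conj_mem _ hx b) ((hNsoc hx).proj_mulConj b)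

end Socle

section IdealChains

variable {B : Type*} [SkewBrace B]

/-- The condition on consecutive terms of the chain of ideals in `IsSupersoluble`. -/
def IsSupersolubleLink (I J : BraceIdeal B) : Prop :=
  I.carrier ⊆ J.carrier ∧
    ((QuotAddInfCyclic I.carrier J.carrier ∧ ∀ x ∈ J.carrier, MemSocQuot I.carrier x) ∨
      ∃ p : ℕ, QuotPrimeOrder I.carrier J.carrier p)

theorem carrier_subset_of_reflTransGen {I J : BraceIdeal B}
    (h : ReflTransGen IsSupersolubleLink I J) : I.carrier ⊆ J.carrier := by
  induction h with
  | refl => exact subset_rfl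
  | tail _ hlink ih => exact ih.trans hlink.1

theorem isSupersoluble_of_reflTransGen {I J : BraceIdeal B} (hI : I.carrier = {0})
    (hJ : J.carrier = Set.univ) (h : ReflTransGen IsSupersolubleLink I J) : IsSupersoluble B := by
  obtain ⟨n, F, rfl, rfl, hF⟩ := exists_nat_chain_of_reflTransGen h
  exact ⟨n, F, hI, hJ, fun i hi => (hF i hi).1, fun i hi => (hF i hi).2⟩

theorem isSupersolubleLink_of_isNormalLink {I J : BraceIdeal B}
    (h : IsNormalLink I.subgroup J.subgroup) (hJ : J.subgroup ≤ socSubgroup I) :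
    IsSupersolubleLink I J := by
  have hIJ : I.carrier ⊆ J.carrier := h.le
  obtain ⟨-, x, hJx, hfactor⟩ := h
  have hxJ : x ∈ J.subgroup := hJx ▸ mem_sup_right (mem_zpowers x)
  have hx : MemSocQuot I.carrier x := hJ hxJ
  have generates : ∀ y ∈ J.carrier, ∃ n : ℤ, -(n • x) + y ∈ I.carrier := by
    intro y (hy : y ∈ J.subgroup)
    rw [hJx, mem_sup_zpowers_iff] at hy
    exact hy.imp fun n hn => (hx.neg_zsmul_add_mem_iff n y).2 hn
  refine ⟨hIJ, ?_⟩
  rcases hfactor with hinf | ⟨p, hp, hxI, hxp⟩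
  · exact Or.inl ⟨⟨x, hxJ, generates, fun n hn => hinf n ((hx.zsmul_mem_iff n).1 hn)⟩,
      fun y hy => hJ hy⟩
  · refine Or.inr ⟨p, hp, x, hxJ, hxI, ?_, generates⟩
    rw [← natCast_zsmul, hx.zsmul_mem_iff, zpow_natCast]
    exact hxp

theorem exists_ideal_of_reflTransGen_isNormalLink {I : BraceIdeal B} {N : Subgroup B}
    (h : ReflTransGen IsNormalLink I.subgroup N) (hN : N ≤ socSubgroup I) :
    ∃ J : BraceIdeal B, J.subgroup = N ∧ ReflTransGen IsSupersolubleLink I J := by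
  induction h with
  | refl => exact ⟨I, rfl, .refl⟩
  | @tail M N hIM hMN ih =>
    obtain ⟨K, rfl, hIK⟩ := ih (hMN.le.trans hN)
    have hNsoc : N ≤ socSubgroup K :=
      hN.trans (socSubgroup_mono (carrier_subset_of_reflTransGen hIK))
    exact ⟨idealOfNormal K N hMN.1 hMN.le hNsoc, rfl,
      hIK.tail (isSupersolubleLink_of_isNormalLink hMN hNsoc)⟩

/-- The zero ideal, the start of the upper socle series. -/
instance : Bot (BraceIdeal B) where
  bot :=
    { carrier := {0}
      zero_mem := rfl
      add_mem := by rintro _ _ rfl rfl; exact add_zero 0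
      neg_mem := by rintro _ rfl; exact neg_zero
      mul_mem := by rintro _ _ rfl rfl; rw [← one_eq_zero]; exact mul_one 1
      inv_mem := by rintro _ rfl; rw [← one_eq_zero]; exact inv_one
      addConj_mem := by rintro b _ rfl; simp
      mulConj_mem := by rintro b _ rfl; rw [← one_eq_zero]; simp
      lam_mem := by rintro b _ rfl; simpa using lam_add b 0 0 }

theorem exists_ideal_socChain (hmul : Group.IsSupersoluble B) (n : ℕ) :
    ∃ J : BraceIdeal B, J.carrier = socChain B n ∧ ReflTransGen IsSupersolubleLink ⊥ J := by
  induction n with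
  | zero => exact ⟨⊥, rfl, .refl⟩
  | succ n ih =>
    obtain ⟨I, hI, chain_I⟩ := ih
    obtain ⟨J, hJ, chain_IJ⟩ := exists_ideal_of_reflTransGen_isNormalLink
      (reflTransGen_isNormalLink_of_isSupersoluble hmul (subgroup_le_socSubgroup I)) le_rfl
    refine ⟨J, ?_, chain_I.trans chain_IJ⟩
    calc J.carrier = {x | MemSocQuot I.carrier x} := congrArg SetLike.coe hJ
      _ = socChain B (n + 1) := by rw [hI]; rfl

end IdealChains

/-- If `B = Soc_n(B)` for some `n` and the multiplicative group `(B,·)` is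
supersoluble, then the brace `B` is supersoluble. -/
theorem isSupersoluble_of_socChain_of_mul_supersoluble (B : Type*) [SkewBrace B]
    (n : ℕ) (hsoc : socChain B n = Set.univ) (hmul : Group.IsSupersoluble B) :
    IsSupersoluble B := by
  obtain ⟨J, hJ, chain⟩ := exists_ideal_socChain hmul n
  exact isSupersoluble_of_reflTransGen rfl (hJ.trans hsoc) chain

end SkewBrace
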